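/- Let k_p, k_o ∈ ℝ, K_v ∈ ℝ⁶ˣ⁶, and let H_c, C_c : ℝ → ℝ⁶ˣ⁶, e_v : ℝ → ℝ⁶, e_p, e_o : ℝ → ℝ³, J_l : ℝ → ℝ³ˣ³ be functions such that at time t: (i) H_c is symmetric and differentiable with e_v(t)ᵀ(H_c'(t) − 2C_c(t))e_v(t) = 0; (ii) e_v, e_p, e_o are differentiable with H_c(t)·e_v'(t) = −(C_c(t) + K_v)·e_v(t) − (k_p·e_p(t), k_o·e_o(t)); (iii) e_p'(t) equals the first three components of e_v(t) and e_o'(t) = J_l(t)·(last three components of e_v(t)); (iv) J_l(t)ᵀ·e_o(t) = e_o(t). Then the Lyapunov function L(t) := (k_p/2)‖e_p(t)‖² + (k_o/2)‖e_o(t)‖² + (1/2)·e_v(t)ᵀ·H_c(t)·e_v(t) is differentiable at t with L'(t) = −e_v(t)ᵀ·K_v·e_v(t). -/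

import Mathlib

open Matrix

/-!
By the product rule and the symmetry of `H_c`,
`L' = k_p e_p·v + k_o e_o·(J_l ω) + e_v·(H_c e_v') + ½ e_v·(H' e_v)`, where `e_v = (v, ω)`.
Substituting the dynamics for `H_c e_v'`, the term `-e_v·(C_c e_v)` cancels against `½ e_v·(H' e_v)` by
the skew-symmetry hypothesis, and the position and orientation feedback terms cancel against the first
two summands, the latter because `e_o·(J_l ω) = (J_lᵀ e_o)·ω = e_o·ω`.
-/

lemma hasDerivAt_dotProduct {n : ℕ} {u v : ℝ → Fin n → ℝ} {u' v' : Fin n → ℝ} {t : ℝ}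
    (hu : ∀ i, HasDerivAt (fun s => u s i) (u' i) t)
    (hv : ∀ i, HasDerivAt (fun s => v s i) (v' i) t) :
    HasDerivAt (fun s => u s ⬝ᵥ v s) (u' ⬝ᵥ v t + u t ⬝ᵥ v') t := by
  simp only [dotProduct, ← Finset.sum_add_distrib]
  exact HasDerivAt.fun_sum fun i _ => (hu i).mul (hv i)

/-- Under the hypotheses
(i) `H_c` symmetric and differentiable at `t` with `e_v(t)ᵀ(H_c'(t) − 2C_c(t))e_v(t) = 0`,
(ii) `e_v` differentiable at `t` with
    `H_c(t)·e_v'(t) = −(C_c(t) + K_v)·e_v(t) − (k_p·e_p(t), k_o·e_o(t))`,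
(iii) `e_p'(t)` equals the first three components of `e_v(t)` and
    `e_o'(t) = J_l(t)·(last three components of e_v(t))`,
(iv) `J_l(t)ᵀ·e_o(t) = e_o(t)`,
the Lyapunov function
`L(s) = (k_p/2)‖e_p(s)‖² + (k_o/2)‖e_o(s)‖² + (1/2)·e_v(s)ᵀ·H_c(s)·e_v(s)`
is differentiable at `t` with `L'(t) = −e_v(t)ᵀ·K_v·e_v(t)`. -/
theorem lyapunov_derivative
    (k_p k_o : ℝ) (K_v : Matrix (Fin 6) (Fin 6) ℝ)
    (H_c C_c : ℝ → Matrix (Fin 6) (Fin 6) ℝ)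
    (e_v : ℝ → Fin 6 → ℝ) (e_p e_o : ℝ → Fin 3 → ℝ)
    (J_l : ℝ → Matrix (Fin 3) (Fin 3) ℝ) (t : ℝ)
    (H' : Matrix (Fin 6) (Fin 6) ℝ) (ev' : Fin 6 → ℝ)
    (hHsym : ∀ s, (H_c s)ᵀ = H_c s)
    (hH' : ∀ i j, HasDerivAt (fun s => H_c s i j) (H' i j) t)
    (hskew : e_v t ⬝ᵥ ((H' - (2 : ℝ) • C_c t).mulVec (e_v t)) = 0)
    (hev : ∀ i, HasDerivAt (fun s => e_v s i) (ev' i) t)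
    (hdyn : (H_c t).mulVec ev' = -((C_c t + K_v).mulVec (e_v t))
        - (Fin.append (k_p • e_p t) (k_o • e_o t) : Fin 6 → ℝ))
    (hep : ∀ i : Fin 3, HasDerivAt (fun s => e_p s i) (e_v t (Fin.castAdd 3 i)) t)
    (heo : ∀ i : Fin 3, HasDerivAt (fun s => e_o s i)
        ((J_l t).mulVec (fun j : Fin 3 => e_v t (Fin.natAdd 3 j)) i) t)
    (hJ : (J_l t)ᵀ.mulVec (e_o t) = e_o t) :
    HasDerivAt (fun s => k_p / 2 * (e_p s ⬝ᵥ e_p s) + k_o / 2 * (e_o s ⬝ᵥ e_o s)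
        + 1 / 2 * (e_v s ⬝ᵥ (H_c s).mulVec (e_v s)))
      (-(e_v t ⬝ᵥ K_v.mulVec (e_v t))) t := by
  have hHev : ∀ i, HasDerivAt (fun s => (H_c s).mulVec (e_v s) i)
      ((H'.mulVec (e_v t) + (H_c t).mulVec ev') i) t :=
    fun i => hasDerivAt_dotProduct (hH' i) hev
  have hL := (((hasDerivAt_dotProduct hep hep).const_mul (k_p / 2)).add
    ((hasDerivAt_dotProduct heo heo).const_mul (k_o / 2))).add
    ((hasDerivAt_dotProduct hev hHev).const_mul (1 / 2))
  refine hL.congr_deriv ?_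
  have hsym : ev' ⬝ᵥ (H_c t).mulVec (e_v t) = e_v t ⬝ᵥ (H_c t).mulVec ev' := by
    rw [dotProduct_mulVec, ← mulVec_transpose, hHsym, dotProduct_comm]
  have hori : e_o t ⬝ᵥ (J_l t).mulVec (fun j : Fin 3 => e_v t (Fin.natAdd 3 j))
      = e_o t ⬝ᵥ fun j : Fin 3 => e_v t (Fin.natAdd 3 j) := by
    rw [dotProduct_mulVec, ← mulVec_transpose, hJ]
  have happ : e_v t ⬝ᵥ (Fin.append (k_p • e_p t) (k_o • e_o t) : Fin 6 → ℝ)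
      = k_p * (e_p t ⬝ᵥ fun i : Fin 3 => e_v t (Fin.castAdd 3 i))
        + k_o * (e_o t ⬝ᵥ fun j : Fin 3 => e_v t (Fin.natAdd 3 j)) := by
    simp only [dotProduct, Finset.mul_sum]
    refine (Fin.sum_univ_add (a := 3) (b := 3) _).trans ?_
    congr 1 <;> refine Finset.sum_congr rfl fun i _ => ?_
    · rw [Fin.append_left, Pi.smul_apply, smul_eq_mul]; ring
    · rw [Fin.append_right, Pi.smul_apply, smul_eq_mul]; ring
  have hdyn_ev := congrArg (e_v t ⬝ᵥ ·) hdyn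
  simp only [dotProduct_sub, dotProduct_neg, add_mulVec, dotProduct_add, happ] at hdyn_ev
  simp only [sub_mulVec, smul_mulVec, dotProduct_sub, dotProduct_smul, smul_eq_mul] at hskew
  rw [dotProduct_comm _ (e_p t), dotProduct_comm _ (e_o t), dotProduct_add, hsym, hori]
  linarith
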